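/- Let μ be an affinely irreducible self-similar measure on ℝ^d. Then μ(Sing_d) = 0, i.e. μ-almost every x ∈ ℝ^d is not a singular vector. -/

import Mathlib

noncomputable section
open MeasureTheory Metric Filter Topology

variable {E : Type*} [NormedAddCommGroup E] [NormedSpace ℝ E]

/-- `f` is a contraction with ratio `r ∈ (0,1)`. -/
def IsContractionWith (r : ℝ) (f : E → E) : Prop :=
  0 < r ∧ r < 1 ∧ ∀ x y, ‖f x - f y‖ ≤ r * ‖x - y‖

/-- `f` is a contracting similarity with ratio `r ∈ (0,1)`. -/
def IsSimilarityWith (r : ℝ) (f : E → E) : Prop :=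
  0 < r ∧ r < 1 ∧ ∀ x y, ‖f x - f y‖ = r * ‖x - y‖

/-- A self-conformal IFS. -/
def IsSelfConformalIFS {A : Type*} [Fintype A] (φ : A → E → E) : Prop :=
  2 ≤ Fintype.card A ∧
  (∀ a, ∃ r, IsContractionWith r (φ a)) ∧
  (∀ a, ContDiff ℝ 1 (φ a)) ∧
  (∀ a x, 0 < ‖fderiv ℝ (φ a) x‖ ∧ ∀ v, ‖fderiv ℝ (φ a) x v‖ = ‖fderiv ℝ (φ a) x‖ * ‖v‖) ∧
  (∃ H α₀ : ℝ, 0 < H ∧ 0 < α₀ ∧ ∀ a x y,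
    |‖fderiv ℝ (φ a) x‖ - ‖fderiv ℝ (φ a) y‖| ≤ H * ‖x - y‖ ^ α₀) ∧
  (∃ a₁ a₂ x₁ x₂, φ a₁ x₁ = x₁ ∧ φ a₂ x₂ = x₂ ∧ x₁ ≠ x₂)

/-- A self-similar IFS. -/
def IsSelfSimilarIFS {A : Type*} [Fintype A] (φ : A → E → E) : Prop :=
  2 ≤ Fintype.card A ∧
  (∀ a, ∃ r, IsSimilarityWith r (φ a)) ∧
  (∃ a₁ a₂ x₁ x₂, φ a₁ x₁ = x₁ ∧ φ a₂ x₂ = x₂ ∧ x₁ ≠ x₂)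

/-- The IFS is affinely irreducible: no (nonempty) proper affine subspace is preserved. -/
def AffinelyIrreducible {A : Type*} (φ : A → E → E) : Prop :=
  ¬ ∃ W : AffineSubspace ℝ E, (W : Set E).Nonempty ∧ W ≠ ⊤ ∧
      ∀ a, φ a '' (W : Set E) ⊆ (W : Set E)

/-- Closed `ε`-neighbourhood of an affine subspace. -/
def affNbhd (W : AffineSubspace ℝ E) (ε : ℝ) : Set E :=
  {y | Metric.infDist y (W : Set E) ≤ ε}

/-- topological support of a measure -/
def msupport [MeasurableSpace E] (μ : Measure E) : Set E :=
  {x | ∀ r : ℝ, 0 < r → 0 < μ (Metric.ball x r)}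

/-- distance between two sets -/
def setDist (S T : Set E) : ℝ := sInf (Set.image2 dist S T)

/-- map corresponding to a finite word (as a list) -/
def listMap {A : Type*} (φ : A → E → E) : List A → E → E
  | [] => id
  | a :: l => φ a ∘ listMap φ l

/-- map corresponding to the first `n` letters of an infinite word -/
def wordMap {A : Type*} (φ : A → E → E) : ℕ → (ℕ → A) → E → E
  | 0, _ => id
  | n + 1, a => φ (a 0) ∘ wordMap φ n (fun k => a (k + 1))

/-- set of `Ψ`-well-approximable vectors in `ℝ^d` -/
def WApprox (d : ℕ) (Ψ : ℕ → ℝ) : Set (EuclideanSpace ℝ (Fin d)) :=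
  {x | {pq : (Fin d → ℤ) × ℕ | 0 < pq.2 ∧
        ∀ i, |x i - (pq.1 i : ℝ) / (pq.2 : ℝ)| ≤ Ψ pq.2}.Infinite}

/-- set of singular vectors in `ℝ^d` -/
def Sing (d : ℕ) : Set (EuclideanSpace ℝ (Fin d)) :=
  {x | ∀ c : ℝ, 0 < c → ∃ T : ℝ, 0 < T ∧ ∀ t : ℝ, T ≤ t →
    ∃ q : ℕ, 0 < q ∧ (q : ℝ) < t ∧
      ∀ i, |(q : ℝ) * x i - round ((q : ℝ) * x i)| ≤ c * t ^ (-(1 : ℝ) / (d : ℝ))}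
def slab {d : ℕ} (n : EuclideanSpace ℝ (Fin d)) (b ε : ℝ) : Set (EuclideanSpace ℝ (Fin d)) :=
  {x | |inner ℝ n x - b| ≤ ε}

lemma slab_closed {d : ℕ} (n : EuclideanSpace ℝ (Fin d)) (b ε : ℝ) : IsClosed (slab n b ε) := by
  unfold slab
  exact isClosed_le (by fun_prop) continuous_const

lemma slab_mono {d : ℕ} (n : EuclideanSpace ℝ (Fin d)) (b : ℝ) {ε ε' : ℝ} (h : ε ≤ ε') :
    slab n b ε ⊆ slab n b ε' := fun _ hx => le_trans hx h

/-- similarities are affine -/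
lemma sim_dual {d : ℕ} {f : EuclideanSpace ℝ (Fin d) → EuclideanSpace ℝ (Fin d)} {r : ℝ}
    (hr : 0 < r) (hf : ∀ x y, ‖f x - f y‖ = r * ‖x - y‖) :
    ∃ g : EuclideanSpace ℝ (Fin d) →ᵃ[ℝ] EuclideanSpace ℝ (Fin d), (∀ x, f x = g x) ∧
     ∀ n : EuclideanSpace ℝ (Fin d), ‖n‖ = 1 →
      ∃ n' : EuclideanSpace ℝ (Fin d), ‖n'‖ = 1 ∧ ∃ s, ∀ x, inner ℝ n (f x) = r * inner ℝ n' x + s := by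
  have hiso : Isometry (fun x => r⁻¹ • f x) := by
    refine Isometry.of_dist_eq fun x y => ?_
    rw [dist_eq_norm, ← smul_sub, norm_smul, hf, dist_eq_norm, Real.norm_of_nonneg (by positivity)]
    field_simp
  let g := hiso.affineIsometryOfStrictConvexSpace
  have hg : ∀ x, g x = r⁻¹ • f x := fun x => rfl
  have hfg : ∀ x, f x = r • g x := fun x => by rw [hg, smul_inv_smul₀ hr.ne']
  let L := g.linearIsometry
  have hL : ∀ x, g x = L x + g 0 := fun x => by
    have := g.map_vadd 0 x
    simpa using this
  refine ⟨r • g.toAffineMap, fun x => by rw [hfg]; rfl, fun n hn => ?_⟩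
  let Le : EuclideanSpace ℝ (Fin d) ≃ₗᵢ[ℝ] EuclideanSpace ℝ (Fin d) :=
    L.toLinearIsometryEquiv rfl
  refine ⟨Le.symm n, by simp [hn], inner ℝ n (r • g 0), fun x => ?_⟩
  have : inner ℝ (Le.symm n) x = inner ℝ n (L x) := by
    rw [← Le.inner_map_map]; simp [Le]
  rw [hfg, hL, this, smul_add, inner_add_right, inner_smul_right]

lemma slab_preimage {d : ℕ} {f : EuclideanSpace ℝ (Fin d) → EuclideanSpace ℝ (Fin d)} {r : ℝ}
    (hr : 0 < r) (hf : ∀ x y, ‖f x - f y‖ = r * ‖x - y‖)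
    (n : EuclideanSpace ℝ (Fin d)) (hn : ‖n‖ = 1) (b : ℝ) :
    ∃ n' : EuclideanSpace ℝ (Fin d), ‖n'‖ = 1 ∧ ∃ b', ∀ ε, f ⁻¹' (slab n b ε) = slab n' b' (ε / r) := by
  obtain ⟨_, _, h⟩ := sim_dual hr hf
  obtain ⟨n', hn', s, hs⟩ := h n hn
  refine ⟨n', hn', (b - s) / r, fun ε => ?_⟩
  ext x
  simp only [slab, Set.mem_preimage, Set.mem_ofPred_eq, hs]
  rw [le_div_iff₀ hr]
  have : |inner ℝ n' x - (b - s) / r| * r = |r * inner ℝ n' x + s - b| := by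
    nth_rw 2 [← abs_of_pos hr]
    rw [← abs_mul]; congr 1; field_simp; ring
  rw [this]

section
variable {d : ℕ} {A : Type*} [Fintype A]
  {φ : A → EuclideanSpace ℝ (Fin d) → EuclideanSpace ℝ (Fin d)}
  {p r : A → ℝ} {rmin rmax : ℝ}
  {μ : Measure (EuclideanSpace ℝ (Fin d))} [IsProbabilityMeasure μ]

lemma avg_le (hp : ∀ a, 0 < p a) (hp1 : ∑ a, p a = 1) {f : A → ℝ} {c : ℝ} (h : ∀ a, f a ≤ c) :
    ∑ a, p a * f a ≤ c := by
  calc ∑ a, p a * f a ≤ ∑ a, p a * c :=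
        Finset.sum_le_sum fun a _ => mul_le_mul_of_nonneg_left (h a) (hp a).le
    _ = c := by rw [← Finset.sum_mul, hp1, one_mul]

/-- compact support -/
lemma supp_bdd (hp : ∀ a, 0 < p a) (hp1 : ∑ a, p a = 1)
    (hr0 : 0 < rmax) (hr1 : rmax < 1) (hmax : ∀ a, r a ≤ rmax)
    (hf : ∀ a x y, ‖φ a x - φ a y‖ = r a * ‖x - y‖)
    (hst : ∀ S, MeasurableSet S → μ.real S = ∑ a, p a * μ.real (φ a ⁻¹' S)) :
    ∃ R, 0 < R ∧ μ (closedBall 0 R)ᶜ = 0 := by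
  let D := 1 + ∑ a, ‖φ a 0‖
  have hD : 0 < D := by positivity
  have hDa : ∀ a, ‖φ a 0‖ ≤ D := fun a => by
    have := Finset.single_le_sum (f := fun a => ‖φ a 0‖) (fun _ _ => norm_nonneg _) (Finset.mem_univ a)
    simp only [D]; linarith
  have h1r : 0 < 1 - rmax := by linarith
  let R := D / (1 - rmax)
  have hR : 0 < R := by positivity
  -- tail comparison
  have step : ∀ x : ℝ, 0 ≤ x → μ.real (closedBall 0 (R + x))ᶜ ≤ μ.real (closedBall 0 (R + x / rmax))ᶜ := by
    intro x hx
    rw [hst _ measurableSet_closedBall.compl]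
    refine avg_le hp hp1 fun a => measureReal_mono ?_
    intro y hy
    simp only [Set.mem_preimage, Set.mem_compl_iff, mem_closedBall, dist_zero_right, not_le] at hy ⊢
    by_contra hcon
    push Not at hcon
    have h1 : ‖φ a y‖ ≤ ‖φ a y - φ a 0‖ + ‖φ a 0‖ := by
      simpa using norm_add_le (φ a y - φ a 0) (φ a 0)
    rw [hf, sub_zero] at h1
    have h2 : r a * ‖y‖ ≤ rmax * (R + x / rmax) := by
      have := hmax a
      gcongr
    have h3 : rmax * (R + x / rmax) = rmax * R + x := by field_simp
    have h4 : R - rmax * R = D := by simp only [R]; field_simp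
    linarith [hDa a]
  have step' : ∀ k : ℕ, μ.real (closedBall 0 (R + 1))ᶜ ≤ μ.real (closedBall 0 (R + (1 / rmax) ^ k))ᶜ := by
    intro k
    induction k with
    | zero => simp
    | succ k ih =>
      refine ih.trans ((step _ (by positivity)).trans (le_of_eq ?_))
      rw [pow_succ]; congr 5; field_simp
  refine ⟨R + 1, by linarith, ?_⟩
  have hlim : Tendsto (fun k : ℕ => μ (closedBall 0 (k : ℝ))ᶜ) atTop (𝓝 (μ (⋂ k : ℕ, (closedBall (0 : EuclideanSpace ℝ (Fin d)) (k : ℝ))ᶜ))) := by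
    refine tendsto_measure_iInter_atTop (fun k => measurableSet_closedBall.compl.nullMeasurableSet) ?_ ⟨0, measure_ne_top _ _⟩
    intro i j hij
    exact Set.compl_subset_compl.2 (closedBall_subset_closedBall (by exact_mod_cast hij))
  have hempty : (⋂ k : ℕ, (closedBall (0 : EuclideanSpace ℝ (Fin d)) (k : ℝ))ᶜ) = ∅ := by
    ext x
    simp only [Set.mem_iInter, Set.mem_compl_iff, mem_closedBall, dist_zero_right, Set.mem_empty_iff_false, iff_false, not_forall, not_not]
    exact exists_nat_ge ‖x‖
  rw [hempty, measure_empty] at hlim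
  refine le_antisymm (ge_of_tendsto' hlim fun k => ?_) bot_le
  obtain ⟨m, hm⟩ := pow_unbounded_of_one_lt (k : ℝ) (one_lt_one_div hr0 hr1)
  have h1 := step' m
  have h2 : μ (closedBall 0 (R + 1))ᶜ ≤ μ (closedBall 0 (R + (1 / rmax) ^ m))ᶜ := by
    rwa [measureReal_def, measureReal_def, ENNReal.toReal_le_toReal (measure_ne_top _ _) (measure_ne_top _ _)] at h1
  exact h2.trans (measure_mono (Set.compl_subset_compl.2 (closedBall_subset_closedBall (by linarith))))

/-- localisation of slabs -/
lemma slab_local (hp : ∀ a, 0 < p a) (hp1 : ∑ a, p a = 1)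
    (hm0 : 0 < rmin) (hmin : ∀ a, rmin ≤ r a)
    (hr0 : 0 < rmax) (hr1 : rmax < 1) (hmax : ∀ a, r a ≤ rmax)
    (hf : ∀ a x y, ‖φ a x - φ a y‖ = r a * ‖x - y‖)
    (hst : ∀ S, MeasurableSet S → μ.real S = ∑ a, p a * μ.real (φ a ⁻¹' S))
    {R : ℝ} (hR : 0 < R) (hsupp : μ (closedBall 0 R)ᶜ = 0)
    {l : ℝ} (hl0 : 0 < l) (hl : l ≤ 1 / 2) {G : ℝ} 
    (hG : ∀ n : EuclideanSpace ℝ (Fin d), ‖n‖ = 1 → ∀ b, μ.real (slab n b (l * (4 * R / rmin))) ≤ G)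
    (k : ℕ) : ∀ E : ℝ, rmax ^ k * (4 * R) ≤ E → E ≤ 4 * R / rmin →
      ∀ n : EuclideanSpace ℝ (Fin d), ‖n‖ = 1 → ∀ b,
      μ.real (slab n b (l * E)) ≤ G * μ.real (slab n b E) := by
  have hra : ∀ a, 0 < r a := fun a => hm0.trans_le (hmin a)
  have base : ∀ E : ℝ, 4 * R ≤ E → E ≤ 4 * R / rmin →
      ∀ n : EuclideanSpace ℝ (Fin d), ‖n‖ = 1 → ∀ b,
      μ.real (slab n b (l * E)) ≤ G * μ.real (slab n b E) := by
    intro E hE hE' n hn b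
    have hG0 : 0 ≤ G := le_trans measureReal_nonneg (hG n hn b)
    by_cases hmeet : ∃ x ∈ slab n b (l * E), ‖x‖ ≤ R
    · obtain ⟨x, hx, hxR⟩ := hmeet
      have : μ.real (slab n b E) = 1 := by
        have : μ (slab n b E)ᶜ = 0 := by
          refine measure_mono_null (Set.compl_subset_compl.2 ?_) hsupp
          intro y hy
          simp only [mem_closedBall, dist_zero_right] at hy
          simp only [slab, Set.mem_ofPred_eq] at hx ⊢
          have h1 : |inner ℝ n y - inner ℝ n x| ≤ 2 * R := by
            rw [← inner_sub_right]
            refine (abs_real_inner_le_norm _ _).trans ?_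
            rw [hn, one_mul]
            refine (norm_sub_le _ _).trans (by linarith)
          have h2 : l * E ≤ 1 / 2 * E := by gcongr; linarith
          rw [abs_le] at *
          constructor <;> linarith
        rw [measureReal_def, (prob_compl_eq_zero_iff (slab_closed _ _ _).measurableSet).1 this]
        simp
      rw [this, mul_one]
      exact (measureReal_mono (slab_mono _ _ (by gcongr))).trans (hG n hn b)
    · push Not at hmeet
      have : μ (slab n b (l * E)) = 0 := by
        refine measure_mono_null ?_ hsupp
        intro y hy
        simpa using hmeet y hy
      rw [measureReal_def, this]
      simp only [ENNReal.toReal_zero]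
      positivity
  induction k with
  | zero => simpa using base
  | succ k ih =>
    intro E hE hE' n hn b
    rcases le_or_gt (4 * R) E with h | h
    · exact base E h hE' n hn b
    have hE0 : 0 < E := lt_of_lt_of_le (by positivity) hE
    rw [hst _ (slab_closed _ _ _).measurableSet, hst _ (slab_closed _ _ _).measurableSet, Finset.mul_sum]
    refine Finset.sum_le_sum fun a _ => ?_
    obtain ⟨n', hn', b', hb'⟩ := slab_preimage (hra a) (hf a) n hn b
    rw [hb', hb', mul_div_assoc, ← mul_assoc, mul_comm G, mul_assoc]
    refine mul_le_mul_of_nonneg_left (ih _ ?_ ?_ n' hn' b') (hp a).le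
    · rw [le_div_iff₀ (hra a)]
      refine le_trans ?_ hE
      rw [pow_succ]
      have := hmax a
      calc rmax ^ k * (4 * R) * r a ≤ rmax ^ k * (4 * R) * rmax := by gcongr
        _ = _ := by ring
    · have := hmin a
      gcongr

/-- localisation of sets which are locally inside slabs -/
lemma set_local {R C α τ : ℝ} (hp : ∀ a, 0 < p a) (hp1 : ∑ a, p a = 1)
    (hm0 : 0 < rmin) (hmin : ∀ a, rmin ≤ r a)
    (hr0 : 0 < rmax) (hmax : ∀ a, r a ≤ rmax)
    (hf : ∀ a x y, ‖φ a x - φ a y‖ = r a * ‖x - y‖)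
    (hst : ∀ S, MeasurableSet S → μ.real S = ∑ a, p a * μ.real (φ a ⁻¹' S))
    (hR : 0 < R) (hsupp : μ (closedBall 0 R)ᶜ = 0) (hτ : 0 < τ)
    (hG : ∀ n : EuclideanSpace ℝ (Fin d), ‖n‖ = 1 → ∀ b ε, 0 < ε → μ.real (slab n b ε) ≤ C * ε ^ α)
    (k : ℕ) : ∀ ρ : ℝ, rmax ^ k ≤ ρ → ρ ≤ 1 / rmin → ∀ S : Set (EuclideanSpace ℝ (Fin d)),
      MeasurableSet S →
      (∀ z, ∃ n : EuclideanSpace ℝ (Fin d), ‖n‖ = 1 ∧ ∃ b, S ∩ closedBall z (R * ρ) ⊆ slab n b (τ * ρ)) →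
      μ.real S ≤ C * (τ / rmin) ^ α := by
  have hra : ∀ a, 0 < r a := fun a => hm0.trans_le (hmin a)
  have base : ∀ ρ : ℝ, 1 ≤ ρ → ρ ≤ 1 / rmin → ∀ S : Set (EuclideanSpace ℝ (Fin d)),
      MeasurableSet S →
      (∀ z, ∃ n : EuclideanSpace ℝ (Fin d), ‖n‖ = 1 ∧ ∃ b, S ∩ closedBall z (R * ρ) ⊆ slab n b (τ * ρ)) →
      μ.real S ≤ C * (τ / rmin) ^ α := by
    intro ρ h1 h2 S hS h
    obtain ⟨n, hn, b, hb⟩ := h 0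
    refine le_trans ?_ (hG n hn b (τ / rmin) (by positivity))
    have : μ.real S = μ.real (S ∩ closedBall 0 R) := by
      rw [measureReal_def, measureReal_def, measure_inter_conull hsupp]
    rw [this]
    refine measureReal_mono ?_
    refine le_trans (Set.inter_subset_inter_right S (closedBall_subset_closedBall ?_)) (hb.trans (slab_mono _ _ ?_))
    · nlinarith
    · rw [div_eq_mul_one_div]; gcongr
  induction k with
  | zero => simpa using base
  | succ k ih =>
    intro ρ hρ hρ' S hS h
    rcases le_or_gt 1 ρ with h1 | h1
    · exact base ρ h1 hρ' S hS h
    have hρ0 : 0 < ρ := lt_of_lt_of_le (by positivity) hρ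
    rw [hst S hS]
    refine avg_le hp hp1 fun a => ?_
    have hcont : Continuous (φ a) := by
      obtain ⟨g, hg, _⟩ := sim_dual (hra a) (hf a)
      rw [funext hg]; exact g.continuous_of_finiteDimensional
    refine ih (ρ / r a) ?_ ?_ _ (hcont.measurable hS) fun z => ?_
    · rw [le_div_iff₀ (hra a)]
      refine le_trans ?_ hρ
      rw [pow_succ]
      have := hmax a
      gcongr
    · have := hmin a
      gcongr
    · obtain ⟨n, hn, b, hb⟩ := h (φ a z)
      obtain ⟨n', hn', b', hb'⟩ := slab_preimage (hra a) (hf a) n hn b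
      refine ⟨n', hn', b', ?_⟩
      rw [← mul_div_assoc, ← mul_div_assoc, ← hb']
      rintro x ⟨hx, hx'⟩
      refine hb ⟨hx, ?_⟩
      rw [mem_closedBall, dist_eq_norm, le_div_iff₀ (hra a)] at hx'
      rw [mem_closedBall, dist_eq_norm, hf]
      linarith

end

/-- simplex lemma -/
lemma simplex_lemma {d : ℕ} (hd : 0 < d) (z : EuclideanSpace ℝ (Fin d)) (t ρ : ℝ) (ht : 0 ≤ t)
    (hρ : 0 ≤ ρ) (hsmall : ((d + 1).factorial : ℝ) * (t * (t * ρ) ^ d) < 1) :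
    ∃ n : EuclideanSpace ℝ (Fin d), ‖n‖ = 1 ∧ ∃ b : ℝ, ∀ (q : ℕ) (p : Fin d → ℤ)
      (y : EuclideanSpace ℝ (Fin d)), 0 < q → (q : ℝ) ≤ t → (∀ i, (q : ℝ) * y i = p i) →
      dist y z ≤ ρ → inner ℝ n y = b := by
  classical
  let S : Set (Fin (d + 1) → ℝ) := {v | ∃ (q : ℕ) (p : Fin d → ℤ)
      (y : EuclideanSpace ℝ (Fin d)), 0 < q ∧ (q : ℝ) ≤ t ∧ (∀ i, (q : ℝ) * y i = p i) ∧
      dist y z ≤ ρ ∧ v = Fin.cons (q : ℝ) (fun i => (p i : ℝ))}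
  have hspan : Submodule.span ℝ S < ⊤ := by
    rw [lt_top_iff_ne_top]
    intro htop
    obtain ⟨B, hBS, hBspan, hBli⟩ := exists_linearIndependent ℝ S
    rw [htop] at hBspan
    let bas : Module.Basis B ℝ (Fin (d + 1) → ℝ) := Module.Basis.mk hBli (by simp [hBspan])
    let e : B ≃ Fin (d + 1) := bas.indexEquiv (Pi.basisFun ℝ (Fin (d + 1)))
    have hli : LinearIndependent ℝ (fun k => ((e.symm k : B) : Fin (d + 1) → ℝ)) :=
      hBli.comp _ e.symm.injective
    have hch : ∀ k, ((e.symm k : B) : Fin (d + 1) → ℝ) ∈ S := fun k => hBS (e.symm k).2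
    choose q p y hq hqt hqy hyz hv using hch
    let MZ : Matrix (Fin (d + 1)) (Fin (d + 1)) ℤ :=
      fun i k => (Fin.cons (q k : ℤ) (p k) : Fin (d + 1) → ℤ) i
    let M : Matrix (Fin (d + 1)) (Fin (d + 1)) ℝ :=
      fun i k => ((e.symm k : B) : Fin (d + 1) → ℝ) i
    have hMZ : M = MZ.map (Int.cast) := by
      ext i k
      change ((e.symm k : B) : Fin (d + 1) → ℝ) i =
        (((Fin.cons (q k : ℤ) (p k) : Fin (d + 1) → ℤ) i : ℤ) : ℝ)
      rw [hv]
      refine Fin.cases ?_ (fun j => ?_) i <;> simp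
    have hdet : M.det ≠ 0 := by
      have h1 : LinearIndependent ℝ M.col := hli
      rw [Matrix.linearIndependent_cols_iff_isUnit, Matrix.isUnit_iff_isUnit_det] at h1
      exact h1.ne_zero
    have hdetZ : M.det = (MZ.det : ℝ) := by
      rw [hMZ]; exact (Int.cast_det MZ).symm
    have hge : 1 ≤ |M.det| := by
      rw [hdetZ] at hdet ⊢
      have : MZ.det ≠ 0 := by exact_mod_cast hdet
      exact_mod_cast Int.one_le_abs this
    let c : Fin (d + 1) → ℝ := Fin.cons 0 (fun j => - z j)
    let N : Matrix (Fin (d + 1)) (Fin (d + 1)) ℝ := fun i k => M i k + c i * M 0 k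
    have hN : N.det = M.det :=
      Matrix.det_eq_of_forall_row_eq_smul_add_const c 0 (by simp [c]) (fun i j => rfl)
    have hN0 : ∀ k, |N 0 k| ≤ t := by
      intro k
      simp only [N, M, c, hv, Fin.cons_zero, zero_mul, add_zero]
      rw [abs_of_nonneg (by positivity)]; exact hqt k
    have hNs : ∀ j k, |N (Fin.succ j) k| ≤ t * ρ := by
      intro j k
      simp only [N, M, c, hv, Fin.cons_zero, Fin.cons_succ]
      rw [← hqy k j]
      have h1 : |y k j - z j| ≤ ρ := by
        have h2 := PiLp.norm_apply_le (y k - z) j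
        rw [← dist_eq_norm] at h2
        have h3 := h2.trans (hyz k)
        simpa using h3
      have h4 : (q k : ℝ) * y k j + -z j * q k = q k * (y k j - z j) := by ring
      rw [h4, abs_mul, abs_of_nonneg (by positivity : (0 : ℝ) ≤ q k)]
      exact mul_le_mul (hqt k) h1 (abs_nonneg _) ht
    have hle : |N.det| ≤ ((d + 1).factorial : ℝ) * (t * (t * ρ) ^ d) := by
      rw [← Matrix.det_transpose, Matrix.det_apply]
      refine (Finset.abs_sum_le_sum_abs _ _).trans ?_
      have hterm : ∀ σ : Equiv.Perm (Fin (d + 1)),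
          |Equiv.Perm.sign σ • ∏ i, N.transpose (σ i) i| ≤ t * (t * ρ) ^ d := by
        intro σ
        have h1 : |Equiv.Perm.sign σ • ∏ i, N.transpose (σ i) i| = |∏ i, N.transpose (σ i) i| := by
          rcases Int.units_eq_one_or (Equiv.Perm.sign σ) with h | h <;> simp [h]
        rw [h1, Finset.abs_prod, Fin.prod_univ_succ]
        refine mul_le_mul (hN0 _) ?_ (Finset.prod_nonneg fun _ _ => abs_nonneg _) ht
        refine (Finset.prod_le_prod (fun _ _ => abs_nonneg _) (fun j _ => hNs j _)).trans ?_
        simp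
      refine (Finset.sum_le_sum (fun σ _ => hterm σ)).trans (le_of_eq ?_)
      rw [Finset.sum_const, Finset.card_univ, Fintype.card_perm, Fintype.card_fin, nsmul_eq_mul]
    rw [hN] at hle
    linarith
  obtain ⟨f, hf0, hf⟩ := Submodule.exists_le_ker_of_lt_top _ hspan
  let m : Fin (d + 1) → ℝ := fun i => f (Pi.single i 1)
  have hfm : ∀ v, f v = ∑ i, m i * v i := by
    intro v
    rw [LinearMap.pi_apply_eq_sum_univ f v]
    refine Finset.sum_congr rfl fun i _ => ?_
    simp only [smul_eq_mul, m]
    rw [mul_comm]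
    congr 2
    ext j; simp [Pi.single_apply, eq_comm]
  let m' : EuclideanSpace ℝ (Fin d) := WithLp.toLp 2 (fun j => m (Fin.succ j))
  have key : ∀ (q : ℕ) (p : Fin d → ℤ)
      (y : EuclideanSpace ℝ (Fin d)), 0 < q → (q : ℝ) ≤ t → (∀ i, (q : ℝ) * y i = p i) →
      dist y z ≤ ρ → m 0 + inner ℝ m' y = 0 := by
    intro q p y hq hqt hqy hyz
    have hmem : (Fin.cons (q : ℝ) (fun i => (p i : ℝ)) : Fin (d + 1) → ℝ) ∈ S :=
      ⟨q, p, y, hq, hqt, hqy, hyz, rfl⟩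
    have h0 : f (Fin.cons (q : ℝ) (fun i => (p i : ℝ))) = 0 := hf (Submodule.subset_span hmem)
    rw [hfm, Fin.sum_univ_succ] at h0
    simp only [Fin.cons_zero, Fin.cons_succ, ← hqy] at h0
    have hq' : (q : ℝ) ≠ 0 := by positivity
    apply mul_left_cancel₀ hq'
    rw [mul_zero, ← h0, mul_add, PiLp.inner_apply, Finset.mul_sum]
    congr 1
    · ring
    · refine Finset.sum_congr rfl fun j _ => ?_
      simp [m']; ring
  by_cases hm' : m' = 0
  · have hm0 : m 0 ≠ 0 := by
      intro h0
      apply hf0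
      ext1 i
      have hmi : m i = 0 := by
        refine Fin.cases h0 (fun j => ?_) i
        have := congrArg (fun w : EuclideanSpace ℝ (Fin d) => w j) hm'
        simpa [m'] using this
      ext
      simpa [m] using hmi
    refine ⟨EuclideanSpace.single ⟨0, hd⟩ 1, by simp, 0, fun q p y hq hqt hqy hyz => ?_⟩
    have := key q p y hq hqt hqy hyz
    rw [hm', inner_zero_left, add_zero] at this
    exact absurd this hm0
  · have hpos : ‖m'‖ ≠ 0 := norm_ne_zero_iff.2 hm'
    refine ⟨‖m'‖⁻¹ • m', by rw [norm_smul, norm_inv, norm_norm, inv_mul_cancel₀ hpos],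
      ‖m'‖⁻¹ * (- m 0), fun q p y hq hqt hqy hyz => ?_⟩
    have := key q p y hq hqt hqy hyz
    rw [real_inner_smul_left]
    congr 1
    linarith

section
variable {d : ℕ} {A : Type*} [Fintype A]
  {φ : A → EuclideanSpace ℝ (Fin d) → EuclideanSpace ℝ (Fin d)}
  {p r : A → ℝ} {rmin rmax : ℝ}
  {μ : Measure (EuclideanSpace ℝ (Fin d))} [IsProbabilityMeasure μ]

/-- no hyperplane carries all the mass -/
lemma no_hyperplane (hp : ∀ a, 0 < p a) (hra : ∀ a, 0 < r a)
    (hf : ∀ a x y, ‖φ a x - φ a y‖ = r a * ‖x - y‖)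
    (hst : ∀ S, MeasurableSet S → μ.real S = ∑ a, p a * μ.real (φ a ⁻¹' S))
    (hirr : AffinelyIrreducible φ) (n : EuclideanSpace ℝ (Fin d)) (hn : ‖n‖ = 1) (b : ℝ)
    (h : ∀ᵐ x ∂μ, inner ℝ n x = b) : False := by
  apply hirr
  have hsub : μ.support ⊆ {x | inner ℝ n x = b} :=
    Measure.support_subset_of_isClosed (isClosed_eq (by fun_prop) continuous_const) h
  refine ⟨affineSpan ℝ μ.support, ?_, ?_, ?_⟩
  · exact (Measure.nonempty_support (IsProbabilityMeasure.ne_zero μ)).mono (subset_affineSpan ℝ _)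
  · intro htop
    let H : AffineSubspace ℝ (EuclideanSpace ℝ (Fin d)) :=
      { carrier := {x | inner ℝ n x = b}
        smul_vsub_vadd_mem' := by
          intro c p1 p2 p3 h1 h2 h3
          have h1' : inner ℝ n p1 = b := h1
          have h2' : inner ℝ n p2 = b := h2
          have h3' : inner ℝ n p3 = b := h3
          change inner ℝ n (c • (p1 -ᵥ p2) +ᵥ p3) = b
          rw [vsub_eq_sub, vadd_eq_add, inner_add_right, inner_smul_right, inner_sub_right,
            h1', h2', h3']
          ring }
    have hle : affineSpan ℝ μ.support ≤ H := affineSpan_le.2 hsub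
    rw [htop] at hle
    have h0 : inner ℝ n (0 : EuclideanSpace ℝ (Fin d)) = b := hle (AffineSubspace.mem_top ℝ _ _)
    have h1 : inner ℝ n n = b := hle (AffineSubspace.mem_top ℝ _ _)
    rw [inner_zero_right] at h0
    rw [real_inner_self_eq_norm_sq, hn, ← h0] at h1
    norm_num at h1
  · intro a
    obtain ⟨g, hg, _⟩ := sim_dual (hra a) (hf a)
    have hcont : Continuous (φ a) := by
      rw [funext hg]; exact g.continuous_of_finiteDimensional
    have hinv : μ.support ⊆ φ a ⁻¹' μ.support := by
      refine Measure.support_subset_of_isClosed (Measure.isClosed_support.preimage hcont) ?_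
      have h0 : μ.real μ.supportᶜ = 0 := by
        rw [measureReal_def, Measure.measure_compl_support]; rfl
      rw [hst _ Measure.isClosed_support.measurableSet.compl,
        Finset.sum_eq_zero_iff_of_nonneg
          (fun a _ => mul_nonneg (hp a).le measureReal_nonneg)] at h0
      have h1 := h0 a (Finset.mem_univ a)
      have h2 : μ.real (φ a ⁻¹' μ.supportᶜ) = 0 := by
        rcases mul_eq_zero.1 h1 with h | h
        · exact absurd h (hp a).ne'
        · exact h
      rw [measureReal_eq_zero_iff] at h2
      rw [mem_ae_iff]
      exact h2
    rw [funext hg] at hinv ⊢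
    change (g '' _) ⊆ _
    rw [← AffineSubspace.coe_map, AffineSubspace.map_span]
    exact affineSpan_mono ℝ (Set.image_subset_iff.2 hinv)

lemma slab_unif (hp : ∀ a, 0 < p a) (hra : ∀ a, 0 < r a)
    (hf : ∀ a x y, ‖φ a x - φ a y‖ = r a * ‖x - y‖)
    (hst : ∀ S, MeasurableSet S → μ.real S = ∑ a, p a * μ.real (φ a ⁻¹' S))
    (hirr : AffinelyIrreducible φ) {R : ℝ} (hR : 0 < R) (hsupp : μ (closedBall 0 R)ᶜ = 0) :
    ∃ k : ℕ, ∀ n : EuclideanSpace ℝ (Fin d), ‖n‖ = 1 → ∀ b,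
      μ.real (slab n b (1 / ((k : ℝ) + 1))) ≤ 1 - 1 / ((k : ℝ) + 2) := by
  by_contra hcon
  push Not at hcon
  choose n hn b hb using hcon
  have hbb : ∀ k, b k ∈ Set.Icc (-(R + 1)) (R + 1) := by
    intro k
    have hmeet : ∃ x ∈ slab (n k) (b k) (1 / ((k : ℝ) + 1)), ‖x‖ ≤ R := by
      by_contra hno
      push Not at hno
      have h0 : μ (slab (n k) (b k) (1 / ((k : ℝ) + 1))) = 0 := by
        refine measure_mono_null ?_ hsupp
        intro y hy
        simpa using hno y hy
      have h1 := hb k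
      rw [measureReal_def, h0, ENNReal.toReal_zero] at h1
      have : 1 / ((k : ℝ) + 2) ≤ 1 := by
        rw [div_le_one (by positivity)]; linarith [(Nat.cast_nonneg k : (0 : ℝ) ≤ k)]
      linarith
    obtain ⟨x, hx, hxR⟩ := hmeet
    have h1 : |inner ℝ (n k) x| ≤ R := by
      refine (abs_real_inner_le_norm _ _).trans ?_
      rw [hn, one_mul]; exact hxR
    have h2 : 1 / ((k : ℝ) + 1) ≤ 1 := by
      rw [div_le_one (by positivity)]; linarith [(Nat.cast_nonneg k : (0 : ℝ) ≤ k)]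
    have h3 : |inner ℝ (n k) x - b k| ≤ 1 / ((k : ℝ) + 1) := hx
    rw [abs_le] at h1 h3
    constructor <;> linarith
  have hcomp : IsCompact ((sphere (0 : EuclideanSpace ℝ (Fin d)) 1) ×ˢ (Set.Icc (-(R + 1)) (R + 1))) :=
    (isCompact_sphere _ _).prod isCompact_Icc
  obtain ⟨⟨n', b'⟩, hmem, ψ, hψ, hlim⟩ := hcomp.tendsto_subseq (x := fun k => (n k, b k))
    (fun k => ⟨by simp [hn k], hbb k⟩)
  have hn' : ‖n'‖ = 1 := by simpa using hmem.1
  have hlim1 : Tendsto (fun k => n (ψ k)) atTop (𝓝 n') := (continuous_fst.tendsto _).comp hlim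
  have hlim2 : Tendsto (fun k => b (ψ k)) atTop (𝓝 b') := (continuous_snd.tendsto _).comp hlim
  have hz : Tendsto (fun k => 1 / ((ψ k : ℝ) + 1)) atTop (𝓝 0) :=
    tendsto_one_div_add_atTop_nhds_zero_nat.comp hψ.tendsto_atTop
  have hae : ∀ η : ℝ, 0 < η → ∀ᵐ x ∂μ, x ∈ slab n' b' η := by
    intro η hη
    have hge : 1 ≤ μ.real (slab n' b' η) := by
      have hsum : Tendsto (fun k => ‖n (ψ k) - n'‖ * R + |b (ψ k) - b'| + 1 / ((ψ k : ℝ) + 1)) atTop (𝓝 0) := by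
        have h1 := (hlim1.sub_const n').norm.mul_const R
        have h2 := (hlim2.sub_const b').abs
        simpa using (h1.add h2).add hz
      have hev := hsum.eventually (gt_mem_nhds hη)
      have hz' : Tendsto (fun k => 1 - 1 / ((ψ k : ℝ) + 1)) atTop (𝓝 1) := by
        simpa using hz.const_sub 1
      refine le_of_tendsto hz' ?_
      filter_upwards [hev] with k hk
      have h1 : μ.real (slab (n (ψ k)) (b (ψ k)) (1 / ((ψ k : ℝ) + 1))) ≤ μ.real (slab n' b' η) := by
        have : μ.real (slab (n (ψ k)) (b (ψ k)) (1 / ((ψ k : ℝ) + 1)))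
            = μ.real (slab (n (ψ k)) (b (ψ k)) (1 / ((ψ k : ℝ) + 1)) ∩ closedBall 0 R) := by
          rw [measureReal_def, measureReal_def, measure_inter_conull hsupp]
        rw [this]
        refine measureReal_mono ?_
        rintro x ⟨hx, hxR⟩
        have hx' : |inner ℝ (n (ψ k)) x - b (ψ k)| ≤ 1 / ((ψ k : ℝ) + 1) := hx
        have hxR' : ‖x‖ ≤ R := by simpa using hxR
        have h5 : |inner ℝ (n (ψ k) - n') x| ≤ ‖n (ψ k) - n'‖ * R :=
          (abs_real_inner_le_norm _ _).trans (by gcongr)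
        rw [inner_sub_left] at h5
        have h7 := neg_abs_le (b (ψ k) - b')
        have h8 := le_abs_self (b (ψ k) - b')
        change |inner ℝ n' x - b'| ≤ η
        generalize |b (ψ k) - b'| = Q at *
        rw [abs_le] at hx' h5 ⊢
        constructor <;> linarith
      have h2 := hb (ψ k)
      have h3 : 1 / ((ψ k : ℝ) + 2) ≤ 1 / ((ψ k : ℝ) + 1) := by gcongr; norm_num
      linarith
    have h1 : μ.real (slab n' b' η) = 1 := le_antisymm measureReal_le_one hge
    have h2 : μ (slab n' b' η) = 1 := by
      rw [measureReal_def] at h1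
      rwa [ENNReal.toReal_eq_one_iff] at h1
    exact (mem_ae_iff_prob_eq_one (slab_closed _ _ _).measurableSet).2 h2
  refine no_hyperplane hp hra hf hst hirr n' hn' b' ?_
  have hall : ∀ᵐ x ∂μ, ∀ k : ℕ, x ∈ slab n' b' (1 / ((k : ℝ) + 1)) :=
    ae_all_iff.2 fun k => hae _ (by positivity)
  filter_upwards [hall] with x hx
  have h1 : |inner ℝ n' x - b'| ≤ 0 :=
    ge_of_tendsto' tendsto_one_div_add_atTop_nhds_zero_nat (fun k => hx k)
  have h2 := abs_eq_zero.1 (le_antisymm h1 (abs_nonneg _))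
  linarith

/-- Hölder decay near hyperplanes -/
lemma slab_holder (hp : ∀ a, 0 < p a) (hp1 : ∑ a, p a = 1)
    (hm0 : 0 < rmin) (hmin : ∀ a, rmin ≤ r a) (hm1 : rmin ≤ 1)
    (hr0 : 0 < rmax) (hr1 : rmax < 1) (hmax : ∀ a, r a ≤ rmax)
    (hf : ∀ a x y, ‖φ a x - φ a y‖ = r a * ‖x - y‖)
    (hst : ∀ S, MeasurableSet S → μ.real S = ∑ a, p a * μ.real (φ a ⁻¹' S))
    (hirr : AffinelyIrreducible φ) {R : ℝ} (hR : 0 < R) (hsupp : μ (closedBall 0 R)ᶜ = 0) :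
    ∃ C α : ℝ, 0 < C ∧ 0 < α ∧ ∀ n : EuclideanSpace ℝ (Fin d), ‖n‖ = 1 → ∀ b ε, 0 < ε →
      μ.real (slab n b ε) ≤ C * ε ^ α := by
  have hra : ∀ a, 0 < r a := fun a => hm0.trans_le (hmin a)
  obtain ⟨k0, hk0⟩ := slab_unif hp hra hf hst hirr hR hsupp
  let E := min (1 / ((k0 : ℝ) + 1)) (2 * R)
  have hE : 0 < E := lt_min (by positivity) (by positivity)
  let θ := 1 - 1 / ((k0 : ℝ) + 2)
  have hθ1 : θ < 1 := by
    have : 0 < 1 / ((k0 : ℝ) + 2) := by positivity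
    simp only [θ]; linarith
  have hθ0 : 0 < θ := by
    have : 1 / ((k0 : ℝ) + 2) < 1 := by
      rw [div_lt_one (by positivity)]; linarith [(Nat.cast_nonneg k0 : (0 : ℝ) ≤ k0)]
    simp only [θ]; linarith
  have hEθ : ∀ n : EuclideanSpace ℝ (Fin d), ‖n‖ = 1 → ∀ b, μ.real (slab n b E) ≤ θ :=
    fun n hn b => (measureReal_mono (slab_mono _ _ (min_le_left _ _))).trans (hk0 n hn b)
  let M := 4 * R / rmin / E
  have hEle : E ≤ 4 * R / rmin := by
    have h1 : E ≤ 2 * R := min_le_right _ _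
    have h2 : 4 * R ≤ 4 * R / rmin := by
      rw [le_div_iff₀ hm0]; nlinarith
    linarith
  have hM : 1 < M := by
    rw [one_lt_div hE]
    have h1 : E ≤ 2 * R := min_le_right _ _
    have h2 : 4 * R ≤ 4 * R / rmin := by
      rw [le_div_iff₀ hm0]; nlinarith
    linarith
  have hM0 : 0 < M := by linarith
  let α := Real.log θ⁻¹ / Real.log M
  have hlogM : 0 < Real.log M := Real.log_pos hM
  have hα : 0 < α := div_pos (Real.log_pos (one_lt_inv_iff₀.2 ⟨hθ0, hθ1⟩)) hlogM
  have hMα : M ^ α = θ⁻¹ := by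
    rw [Real.rpow_def_of_pos hM0]
    simp only [α]
    rw [mul_div_cancel₀ _ hlogM.ne', Real.exp_log (by positivity)]
  let ε1 := E / 2
  have hε1 : 0 < ε1 := by positivity
  obtain ⟨kE, hkE⟩ := exists_pow_lt_of_lt_one (show 0 < E / (4 * R) by positivity) hr1
  have hkE' : rmax ^ kE * (4 * R) ≤ E := by
    rw [lt_div_iff₀ (by positivity)] at hkE; exact hkE.le
  have main : ∀ k : ℕ, ∀ ε : ℝ, ε1 / M ^ k ≤ ε → ∀ n : EuclideanSpace ℝ (Fin d), ‖n‖ = 1 → ∀ b,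
      μ.real (slab n b ε) ≤ (ε / ε1) ^ α := by
    have base : ∀ ε : ℝ, ε1 ≤ ε → ∀ n : EuclideanSpace ℝ (Fin d), ‖n‖ = 1 → ∀ b,
        μ.real (slab n b ε) ≤ (ε / ε1) ^ α := fun ε hε n hn b =>
      measureReal_le_one.trans (Real.one_le_rpow ((one_le_div hε1).2 hε) hα.le)
    intro k
    induction k with
    | zero => simpa using base
    | succ k ih =>
      intro ε hε n hn b
      rcases le_or_gt ε1 ε with h | h
      · exact base ε h n hn b
      have hε0 : 0 < ε := lt_of_lt_of_le (by positivity) hε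
      have hl := slab_local hp hp1 hm0 hmin hr0 hr1 hmax hf hst hR hsupp (l := ε / E)
        (G := (M * ε / ε1) ^ α) (by positivity)
        (by rw [div_le_iff₀ hE]; simp only [ε1] at h; linarith)
        (by
          intro n hn b
          have h1 : ε / E * (4 * R / rmin) = M * ε := by simp only [M]; field_simp
          rw [h1]
          refine ih (M * ε) ?_ n hn b
          calc ε1 / M ^ k = M * (ε1 / M ^ (k + 1)) := by rw [pow_succ]; field_simp
            _ ≤ M * ε := by gcongr)
        kE E hkE' hEle n hn b
      rw [div_mul_cancel₀ _ hE.ne'] at hl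
      refine hl.trans ?_
      calc (M * ε / ε1) ^ α * μ.real (slab n b E) ≤ (M * ε / ε1) ^ α * θ := by
            gcongr; exact hEθ n hn b
        _ = (ε / ε1) ^ α := by
            rw [mul_div_assoc, Real.mul_rpow hM0.le (by positivity), hMα]
            field_simp
  refine ⟨(ε1⁻¹) ^ α, α, by positivity, hα, fun n hn b ε hε => ?_⟩
  obtain ⟨k, hk⟩ := pow_unbounded_of_one_lt (ε1 / ε) hM
  have := main k ε (by
    rw [div_lt_iff₀ hε] at hk
    rw [div_le_iff₀ (by positivity)]; linarith) n hn b
  rwa [div_eq_inv_mul, Real.mul_rpow (by positivity) hε.le] at this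

end

/-- vectors well approximated by a rational of height about `2 ^ (d * (i + 1))` -/
def levelSet (d : ℕ) (c : ℝ) (m i : ℕ) : Set (EuclideanSpace ℝ (Fin d)) :=
  {x | ∃ q : ℕ, ∃ p : Fin d → ℤ, 2 ^ (d * i) ≤ q ∧ q ≤ 2 ^ (d * (i + 1)) ∧
    ∀ j, |(q : ℝ) * x j - p j| ≤ c / 2 ^ m}

lemma levelSet_meas (d : ℕ) (c : ℝ) (m i : ℕ) : MeasurableSet (levelSet d c m i) := by
  have : levelSet d c m i = ⋃ (q : ℕ) (p : Fin d → ℤ), {x | 2 ^ (d * i) ≤ q ∧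
      q ≤ 2 ^ (d * (i + 1)) ∧ ∀ j, |(q : ℝ) * x j - p j| ≤ c / 2 ^ m} := by
    ext x
    simp [levelSet]
  rw [this]
  refine MeasurableSet.iUnion fun q => MeasurableSet.iUnion fun p => ?_
  refine MeasurableSet.inter (MeasurableSet.const _) (MeasurableSet.inter (MeasurableSet.const _) ?_)
  have h2 : {x : EuclideanSpace ℝ (Fin d) | ∀ j, |(q : ℝ) * x j - p j| ≤ c / 2 ^ m} =
      ⋂ j, {x | |(q : ℝ) * x j - p j| ≤ c / 2 ^ m} := by
    ext x; simp
  refine IsClosed.measurableSet ?_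
  change IsClosed {x : EuclideanSpace ℝ (Fin d) | ∀ j, |(q : ℝ) * x j - p j| ≤ c / 2 ^ m}
  rw [h2]
  exact isClosed_iInter fun j => isClosed_le (by fun_prop) continuous_const

lemma norm_le_of_coord {d : ℕ} (v : EuclideanSpace ℝ (Fin d)) {δ : ℝ} (hδ : 0 ≤ δ) (hd : 0 < d)
    (h : ∀ j, |v j| ≤ δ) : ‖v‖ ≤ d * δ := by
  rw [EuclideanSpace.norm_eq, Real.sqrt_le_iff]
  refine ⟨by positivity, ?_⟩
  calc ∑ j, ‖v j‖ ^ 2 ≤ ∑ _j : Fin d, δ ^ 2 := by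
        refine Finset.sum_le_sum fun j _ => ?_
        have := h j
        rw [Real.norm_eq_abs]
        gcongr
    _ = d * δ ^ 2 := by simp
    _ ≤ (d * δ) ^ 2 := by
        have h1 : (1 : ℝ) ≤ d := by exact_mod_cast hd
        rw [mul_pow]
        have h2 : (d : ℝ) ≤ (d : ℝ) ^ 2 := by nlinarith
        gcongr

lemma levelSet_local {d : ℕ} (hd : 0 < d) {R κ c : ℝ} (hR : 0 < R) (hκ : 0 < κ)
    (hκs : ((d + 1).factorial : ℝ) * (2 * R * κ) ^ d < 1) (hc : 0 < c)
    (hc0 : d * (c * 2 ^ d) ≤ R * κ) (i k : ℕ) (z : EuclideanSpace ℝ (Fin d)) :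
    ∃ n : EuclideanSpace ℝ (Fin d), ‖n‖ = 1 ∧ ∃ b,
      levelSet d c (i + 1 + k) i ∩ closedBall z (R * (κ / (2 ^ (i + 1)) ^ (d + 1))) ⊆
        slab n b ((d * (c * 2 ^ d) / κ * (1 / 2) ^ k) * (κ / (2 ^ (i + 1)) ^ (d + 1))) := by
  have hu : (0 : ℝ) < 2 ^ (i + 1) := by positivity
  set u : ℝ := 2 ^ (i + 1) with hu_def
  obtain ⟨n, hn, b, hb⟩ := simplex_lemma hd z (u ^ d) (2 * R * κ / u ^ (d + 1)) (by positivity)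
    (by positivity) (by
      have : u ^ d * (u ^ d * (2 * R * κ / u ^ (d + 1))) ^ d = (2 * R * κ) ^ d := by
        have h1 : u ^ d * (2 * R * κ / u ^ (d + 1)) = 2 * R * κ / u := by
          rw [pow_succ]; field_simp
        rw [h1, div_pow]; field_simp
      rw [this]; exact hκs)
  refine ⟨n, hn, b, ?_⟩
  rintro x ⟨⟨q, p, hq1, hq2, hqx⟩, hxz⟩
  have hq1' : (2 : ℝ) ^ (d * i) ≤ q := by exact_mod_cast hq1
  have hq0' : (0 : ℝ) < q := lt_of_lt_of_le (by positivity) hq1'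
  have hq0 : 0 < q := by exact_mod_cast hq0'
  have hqt : (q : ℝ) ≤ u ^ d := by
    rw [hu_def, ← pow_mul, mul_comm (i + 1)]; exact_mod_cast hq2
  let y : EuclideanSpace ℝ (Fin d) := WithLp.toLp 2 (fun j => (p j : ℝ) / q)
  have hqy : ∀ j, (q : ℝ) * y j = p j := fun j => by simp only [y]; field_simp
  set δ : ℝ := c * 2 ^ d * (1 / 2) ^ k / u ^ (d + 1) with hδ
  have hδ0 : 0 ≤ δ := by positivity
  have hcoord : ∀ j, |(x - y) j| ≤ δ := by
    intro j
    have h1 := hqx j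
    rw [← hqy j, ← mul_sub, abs_mul, abs_of_pos hq0'] at h1
    have h2 : |(x - y) j| = |x j - y j| := by simp
    rw [h2]
    have h3 : (2 : ℝ) ^ (d * i) * |x j - y j| ≤ c / 2 ^ (i + 1 + k) :=
      le_trans (by gcongr) h1
    have h4 : δ = c / 2 ^ (i + 1 + k) / 2 ^ (d * i) := by
      rw [hδ, hu_def, ← pow_mul]
      have h5 : (2 : ℝ) ^ ((i + 1) * (d + 1)) = 2 ^ (d * i) * 2 ^ d * 2 ^ (i + 1) := by
        rw [← pow_add, ← pow_add]; congr 1; ring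
      rw [h5, pow_add 2 (i + 1) k, one_div, inv_pow]
      field_simp
    rw [h4, le_div_iff₀ (by positivity)]
    linarith
  have hxy : ‖x - y‖ ≤ d * δ := norm_le_of_coord _ hδ0 hd hcoord
  have hk1 : ((1 : ℝ) / 2) ^ k ≤ 1 := pow_le_one₀ (by norm_num) (by norm_num)
  have hdδ : d * δ = (d * (c * 2 ^ d)) * (1 / 2) ^ k / u ^ (d + 1) := by rw [hδ]; ring
  have hdδ' : d * δ ≤ R * κ / u ^ (d + 1) := by
    rw [hdδ]
    refine div_le_div_of_nonneg_right ?_ (by positivity)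
    calc (d * (c * 2 ^ d)) * (1 / 2) ^ k ≤ (d * (c * 2 ^ d)) * 1 := by gcongr
      _ ≤ R * κ := by linarith
  have hyz : dist y z ≤ 2 * R * κ / u ^ (d + 1) := by
    refine (dist_triangle_left y z x).trans ?_
    rw [mem_closedBall] at hxz
    rw [dist_eq_norm x y]
    have h1 : R * (κ / u ^ (d + 1)) = R * κ / u ^ (d + 1) := by ring
    have h2 : 2 * R * κ / u ^ (d + 1) = R * κ / u ^ (d + 1) + R * κ / u ^ (d + 1) := by ring
    linarith
  have hny := hb q p y hq0 hqt hqy hyz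
  change |inner ℝ n x - b| ≤ _
  rw [← hny, ← inner_sub_right]
  refine (abs_real_inner_le_norm _ _).trans ?_
  rw [hn, one_mul]
  refine hxy.trans (le_of_eq ?_)
  rw [hdδ]; field_simp

/-- vectors for which the Dirichlet theorem is improved by `c` at time `2 ^ (d * m)` -/
def badSet (d : ℕ) (c : ℝ) (m : ℕ) : Set (EuclideanSpace ℝ (Fin d)) :=
  {x | ∃ q : ℕ, 0 < q ∧ q < 2 ^ (d * m) ∧
    ∀ j, |(q : ℝ) * x j - round ((q : ℝ) * x j)| ≤ c / 2 ^ m}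

lemma badSet_subset {d : ℕ} (hd : 0 < d) (c : ℝ) (m : ℕ) :
    badSet d c m ⊆ ⋃ i ∈ Finset.range m, levelSet d c m i := by
  rintro x ⟨q, hq, hqm, hx⟩
  have hb : 1 < 2 ^ d := Nat.one_lt_two_pow hd.ne'
  simp only [Set.mem_iUnion, Finset.mem_range]
  refine ⟨Nat.log (2 ^ d) q, ?_, q, fun j => round ((q : ℝ) * x j), ?_, ?_, hx⟩
  · exact Nat.log_lt_of_lt_pow hq.ne' (by rwa [← pow_mul])
  · rw [pow_mul]; exact Nat.pow_log_le_self _ hq.ne'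
  · rw [pow_mul]; exact (Nat.lt_pow_succ_log_self hb q).le

lemma sing_subset {d : ℕ} (hd : 0 < d) {c : ℝ} (hc : 0 < c) :
    Sing d ⊆ ⋃ M : ℕ, {x | ∀ m, M ≤ m → x ∈ badSet d c m} := by
  intro x hx
  obtain ⟨T, hT, h⟩ := hx c hc
  obtain ⟨M, hM⟩ := pow_unbounded_of_one_lt T (one_lt_two : (1 : ℝ) < 2)
  simp only [Set.mem_iUnion]
  refine ⟨M, fun m hm => ?_⟩
  have hle : T ≤ (2 : ℝ) ^ (d * m) := by
    refine hM.le.trans (pow_le_pow_right₀ (by norm_num) ?_)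
    nlinarith
  obtain ⟨q, hq, hqt, hqx⟩ := h _ hle
  refine ⟨q, hq, by exact_mod_cast hqt, fun j => (hqx j).trans (le_of_eq ?_)⟩
  have hd' : (d : ℝ) ≠ 0 := by positivity
  have : ((2 : ℝ) ^ (d * m)) ^ (-(1 : ℝ) / (d : ℝ)) = (2 ^ m)⁻¹ := by
    rw [← Real.rpow_natCast, ← Real.rpow_mul (by norm_num)]
    push_cast
    have h1 : (d : ℝ) * m * (-1 / d) = -m := by field_simp
    rw [h1, Real.rpow_neg (by norm_num), Real.rpow_natCast]
  rw [this, div_eq_mul_inv]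

/-- Affinely irreducible self-similar measures give zero mass to singular vectors. -/
theorem self_similar_sing_null
    (d : ℕ) (hd : 0 < d) {A : Type*} [Fintype A]
    (φ : A → EuclideanSpace ℝ (Fin d) → EuclideanSpace ℝ (Fin d))
    (hΦ : IsSelfSimilarIFS φ) (hirr : AffinelyIrreducible φ)
    (p : A → ℝ) (hp : ∀ a, 0 < p a) (hp1 : ∑ a, p a = 1)
    (μ : Measure (EuclideanSpace ℝ (Fin d))) [IsProbabilityMeasure μ]
    (hstat : μ = ∑ a, ENNReal.ofReal (p a) • Measure.map (φ a) μ) :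
    μ (Sing d) = 0 := by
  classical
  obtain ⟨hcard, hsim, -⟩ := hΦ
  choose r hr using hsim
  have hA : Nonempty A := Fintype.card_pos_iff.1 (by omega)
  obtain ⟨amin, hamin⟩ := Finite.exists_min r
  obtain ⟨amax, hamax⟩ := Finite.exists_max r
  have hra : ∀ a, 0 < r a := fun a => (hr a).1
  have hr1 : ∀ a, r a < 1 := fun a => (hr a).2.1
  have hf : ∀ a x y, ‖φ a x - φ a y‖ = r a * ‖x - y‖ := fun a => (hr a).2.2
  have hcont : ∀ a, Continuous (φ a) := fun a => by
    obtain ⟨g, hg, _⟩ := sim_dual (hra a) (hf a)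
    rw [funext hg]; exact g.continuous_of_finiteDimensional
  have hst : ∀ S, MeasurableSet S → μ.real S = ∑ a, p a * μ.real (φ a ⁻¹' S) := by
    intro S hS
    have h1 : μ S = ∑ a, ENNReal.ofReal (p a) * μ (φ a ⁻¹' S) := by
      conv_lhs => rw [hstat]
      rw [Measure.finsetSum_apply]
      refine Finset.sum_congr rfl fun a _ => ?_
      rw [Measure.smul_apply, Measure.map_apply (hcont a).measurable hS, smul_eq_mul]
    rw [measureReal_def, h1, ENNReal.toReal_sum
      (fun a _ => ENNReal.mul_ne_top ENNReal.ofReal_ne_top (measure_ne_top _ _))]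
    refine Finset.sum_congr rfl fun a _ => ?_
    rw [ENNReal.toReal_mul, ENNReal.toReal_ofReal (hp a).le, measureReal_def]
  obtain ⟨R, hR, hsupp⟩ := supp_bdd hp hp1 (hra amax) (hr1 amax) hamax hf hst
  obtain ⟨C, α, hC, hα, hG⟩ := slab_holder hp hp1 (hra amin) hamin (hr1 amin).le (hra amax)
    (hr1 amax) hamax hf hst hirr hR hsupp
  let F : ℝ := ((d + 1).factorial : ℝ)
  have hF : 1 ≤ F := by 
    simp only [F]
    exact_mod_cast Nat.one_le_iff_ne_zero.2 (Nat.factorial_ne_zero (d + 1))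
  let κ : ℝ := min 1 (1 / (4 * R * F))
  have hκ : 0 < κ := lt_min one_pos (by positivity)
  have hκs : F * (2 * R * κ) ^ d < 1 := by
    have h1 : 2 * R * κ ≤ 1 / (2 * F) := by
      calc 2 * R * κ ≤ 2 * R * (1 / (4 * R * F)) := by gcongr; exact min_le_right _ _
        _ = 1 / (2 * F) := by field_simp; norm_num
    have h2 : 1 / (2 * F) ≤ 1 := by rw [div_le_one (by positivity)]; linarith
    have h3 : (2 * R * κ) ^ d ≤ 2 * R * κ :=
      pow_le_of_le_one (by positivity) (h1.trans h2) hd.ne'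
    calc F * (2 * R * κ) ^ d ≤ F * (1 / (2 * F)) := by gcongr; exact h3.trans h1
      _ = 1 / 2 := by field_simp
      _ < 1 := by norm_num
  let D : ℝ := d * 2 ^ d
  have hD : 0 < D := by positivity
  let g : ℝ := (1 / 2) ^ α
  have hg0 : 0 < g := by positivity
  have hg1 : g < 1 := Real.rpow_lt_one (by norm_num) (by norm_num) hα
  let K : ℝ := C * (D / κ / r amin) ^ α * (1 - g)⁻¹
  have hlevel : ∀ c : ℝ, 0 < c → c ≤ R * κ / D → ∀ i k : ℕ,
      μ.real (levelSet d c (i + 1 + k) i) ≤ C * (D / κ / r amin) ^ α * c ^ α * g ^ k := by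
    intro c hc hc0 i k
    have hc0' : d * (c * 2 ^ d) ≤ R * κ := by
      rw [le_div_iff₀ hD] at hc0
      simp only [D] at hc0; linarith
    let ρ : ℝ := κ / (2 ^ (i + 1)) ^ (d + 1)
    have hρ : 0 < ρ := by positivity
    obtain ⟨N, hN⟩ := exists_pow_lt_of_lt_one hρ (hr1 amax)
    have hρ1 : ρ ≤ 1 / r amin := by
      have h1 : ρ ≤ 1 := by
        have h2 : (1 : ℝ) ≤ (2 ^ (i + 1)) ^ (d + 1) :=
          one_le_pow₀ (one_le_pow₀ (by norm_num))
        rw [div_le_one (by positivity)]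
        exact (min_le_left _ _).trans h2
      have h2 : 1 ≤ 1 / r amin := by rw [le_div_iff₀ (hra amin)]; linarith [hr1 amin]
      linarith
    have := set_local (μ := μ) (τ := d * (c * 2 ^ d) / κ * (1 / 2) ^ k) hp hp1 (hra amin) hamin
      (hra amax) hamax hf hst hR hsupp (by positivity) hG N ρ hN.le hρ1
      (levelSet d c (i + 1 + k) i) (levelSet_meas _ _ _ _)
      (fun z => levelSet_local hd hR hκ hκs hc hc0' i k z)
    refine this.trans (le_of_eq ?_)
    have h1 : d * (c * 2 ^ d) / κ * (1 / 2) ^ k / r amin = D / κ / r amin * c * (1 / 2) ^ k := by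
      simp only [D]; ring
    have h2 : (((1 : ℝ) / 2) ^ k) ^ α = g ^ k := by
      simp only [g]
      rw [← Real.rpow_natCast, ← Real.rpow_natCast, ← Real.rpow_mul (by norm_num),
        ← Real.rpow_mul (by norm_num), mul_comm]
    have hrm := hra amin
    rw [h1, Real.mul_rpow (by positivity) (by positivity), Real.mul_rpow (by positivity) hc.le, h2]
    ring
  have hbad : ∀ c : ℝ, 0 < c → c ≤ R * κ / D → ∀ m : ℕ, μ.real (badSet d c m) ≤ K * c ^ α := by
    intro c hc hc0 m
    have hrm := hra amin
    refine (measureReal_mono (badSet_subset hd c m) (measure_ne_top _ _)).trans ?_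
    refine (measureReal_biUnion_finset_le _ _).trans ?_
    have h1 : ∀ i ∈ Finset.range m, μ.real (levelSet d c m i) ≤
        C * (D / κ / r amin) ^ α * c ^ α * g ^ (m - 1 - i) := by
      intro i hi
      rw [Finset.mem_range] at hi
      have h2 : i + 1 + (m - 1 - i) = m := by omega
      have h3 := hlevel c hc hc0 i (m - 1 - i)
      rwa [h2] at h3
    refine (Finset.sum_le_sum h1).trans ?_
    rw [← Finset.mul_sum, Finset.sum_range_reflect (fun k => g ^ k) m]
    have h4 : ∑ k ∈ Finset.range m, g ^ k ≤ (1 - g)⁻¹ := by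
      rw [← tsum_geometric_of_lt_one hg0.le hg1]
      exact (summable_geometric_of_lt_one hg0.le hg1).sum_le_tsum _ (fun _ _ => by positivity)
    calc _ ≤ C * (D / κ / r amin) ^ α * c ^ α * (1 - g)⁻¹ := by gcongr
      _ = K * c ^ α := by simp only [K]; ring
  have hsing : ∀ c : ℝ, 0 < c → c ≤ R * κ / D → μ (Sing d) ≤ ENNReal.ofReal (K * c ^ α) := by
    intro c hc hc0
    refine (measure_mono (sing_subset hd hc)).trans ?_
    have hmono : Monotone (fun M : ℕ => {x | ∀ m, M ≤ m → x ∈ badSet d c m}) := by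
      intro M M' hMM x hx m hm
      exact hx m (hMM.trans hm)
    rw [hmono.measure_iUnion]
    refine iSup_le fun M => ?_
    have hsub : {x | ∀ m, M ≤ m → x ∈ badSet d c m} ⊆ badSet d c M := fun x hx => hx M le_rfl
    refine (measure_mono hsub).trans ?_
    rw [← ofReal_measureReal]
    exact ENNReal.ofReal_le_ofReal (hbad c hc hc0 M)
  have hlim : Tendsto (fun c : ℝ => ENNReal.ofReal (K * c ^ α)) (𝓝[>] 0) (𝓝 0) := by
    have h1 : Tendsto (fun c : ℝ => K * c ^ α) (𝓝 0) (𝓝 (K * 0 ^ α)) :=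
      ((Real.continuousAt_rpow_const 0 α (Or.inr hα.le)).tendsto).const_mul K
    rw [Real.zero_rpow hα.ne', mul_zero] at h1
    have h2 := ENNReal.tendsto_ofReal h1
    rw [ENNReal.ofReal_zero] at h2
    exact h2.mono_left nhdsWithin_le_nhds
  refine le_antisymm (ge_of_tendsto hlim ?_) bot_le
  have hpos : 0 < R * κ / D := by positivity
  filter_upwards [Ioc_mem_nhdsGT hpos] with c hc
  exact hsing c hc.1 hc.2
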